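/- arXiv:1910.10778 — 2 statements merged into one kernel-verified Lean document; each statement's English description precedes it below -/
import Mathlib

section
/- In the tied braid monoid TB_n^B of type B, for every pair i, k with 1 ≤ i < k ≤ n and k − i > 1, and for every choice of elements s_l ∈ {σ_l, σ_l^{-1}} for l = i, i+1, …, k−2, one has η_{i,k} = s_i s_{i+1} ⋯ s_{k−2} η_{k−1} s_{k−2}^{-1} ⋯ s_{i+1}^{-1} s_i^{-1}; that is, all 2^{k−i−1} such expressions are equal to the generalized tie η_{i,k}. -/
/-! The tied braid monoid of type B, `TBₙᴮ`, presented by generators and relations. -/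

/-- Generators of the tied braid monoid of type B on `n` (moving) strands:
`sig i` is `σ_{i+1}`, `sigInv i` is `σ_{i+1}⁻¹`, `rho` is `ρ₁`, `rhoInv` is `ρ₁⁻¹`,
`phi` is `φ₁` and `eta i` is `η_{i+1}` (for `i : Fin (n-1)`). -/
inductive TBGen (n : ℕ) : Type
  | sig : Fin (n - 1) → TBGen n
  | sigInv : Fin (n - 1) → TBGen n
  | rho : TBGen n
  | rhoInv : TBGen n
  | phi : TBGen n
  | eta : Fin (n - 1) → TBGen n

namespace TiedBraidB

variable (n : ℕ)

/-- The word `σᵢ` (for `1 ≤ i ≤ n-1`; junk value `1` otherwise). -/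
def wσ (i : ℕ) : FreeMonoid (TBGen n) :=
  if h : 1 ≤ i ∧ i ≤ n - 1 then FreeMonoid.of (TBGen.sig ⟨i - 1, by omega⟩) else 1

/-- The word `σᵢ⁻¹`. -/
def wσi (i : ℕ) : FreeMonoid (TBGen n) :=
  if h : 1 ≤ i ∧ i ≤ n - 1 then FreeMonoid.of (TBGen.sigInv ⟨i - 1, by omega⟩) else 1

/-- The word `ηᵢ`. -/
def wη (i : ℕ) : FreeMonoid (TBGen n) :=
  if h : 1 ≤ i ∧ i ≤ n - 1 then FreeMonoid.of (TBGen.eta ⟨i - 1, by omega⟩) else 1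

/-- The word `ρ₁`. -/
def wρ : FreeMonoid (TBGen n) := FreeMonoid.of TBGen.rho

/-- The word `ρ₁⁻¹`. -/
def wρi : FreeMonoid (TBGen n) := FreeMonoid.of TBGen.rhoInv

/-- The word `φ₁`. -/
def wφ : FreeMonoid (TBGen n) := FreeMonoid.of TBGen.phi

/-- The descending word `σₖ σₖ₋₁ ⋯ σ₁`. -/
def wσDesc : ℕ → FreeMonoid (TBGen n)
  | 0 => 1
  | k + 1 => wσ n (k + 1) * wσDesc k

/-- The ascending word `σ₁ σ₂ ⋯ σₖ`. -/
def wσAsc : ℕ → FreeMonoid (TBGen n)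
  | 0 => 1
  | k + 1 => wσAsc k * wσ n (k + 1)

/-- The descending word `σₖ⁻¹ σₖ₋₁⁻¹ ⋯ σ₁⁻¹`. -/
def wσiDesc : ℕ → FreeMonoid (TBGen n)
  | 0 => 1
  | k + 1 => wσi n (k + 1) * wσiDesc k

/-- The ascending word `σ₁⁻¹ σ₂⁻¹ ⋯ σₖ⁻¹`. -/
def wσiAsc : ℕ → FreeMonoid (TBGen n)
  | 0 => 1
  | k + 1 => wσiAsc k * wσi n (k + 1)

/-- The defining relations of the tied braid monoid `TBₙᴮ` of type B. -/
inductive tbRel : FreeMonoid (TBGen n) → FreeMonoid (TBGen n) → Prop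
  | sig_inv (i : ℕ) (h1 : 1 ≤ i) (h2 : i ≤ n - 1) :
      tbRel (wσ n i * wσi n i) 1
  | inv_sig (i : ℕ) (h1 : 1 ≤ i) (h2 : i ≤ n - 1) :
      tbRel (wσi n i * wσ n i) 1
  | rho_inv : tbRel (wρ n * wρi n) 1
  | inv_rho : tbRel (wρi n * wρ n) 1
  | sig_comm (i j : ℕ) (h1 : 1 ≤ i) (h2 : i + 1 < j) (h3 : j ≤ n - 1) :
      tbRel (wσ n i * wσ n j) (wσ n j * wσ n i)
  | sig_braid (i : ℕ) (h1 : 1 ≤ i) (h2 : i + 1 ≤ n - 1) :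
      tbRel (wσ n i * wσ n (i + 1) * wσ n i) (wσ n (i + 1) * wσ n i * wσ n (i + 1))
  | rho_sig (i : ℕ) (h1 : 2 ≤ i) (h2 : i ≤ n - 1) :
      tbRel (wρ n * wσ n i) (wσ n i * wρ n)
  | rho_sig_rho_sig (h : 2 ≤ n) :
      tbRel (wρ n * wσ n 1 * wρ n * wσ n 1) (wσ n 1 * wρ n * wσ n 1 * wρ n)
  | eta_comm (i j : ℕ) (h1 : 1 ≤ i) (h2 : i ≤ n - 1) (h3 : 1 ≤ j) (h4 : j ≤ n - 1) :
      tbRel (wη n i * wη n j) (wη n j * wη n i)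
  | eta_sig (i : ℕ) (h1 : 1 ≤ i) (h2 : i ≤ n - 1) :
      tbRel (wη n i * wσ n i) (wσ n i * wη n i)
  | eta_sig_far (i j : ℕ) (h1 : 1 ≤ i) (h2 : i ≤ n - 1) (h3 : 1 ≤ j) (h4 : j ≤ n - 1)
      (h5 : i + 1 < j ∨ j + 1 < i) :
      tbRel (wη n i * wσ n j) (wσ n j * wη n i)
  | eta_sig_sig (i j : ℕ) (h1 : 1 ≤ i) (h2 : i ≤ n - 1) (h3 : 1 ≤ j) (h4 : j ≤ n - 1)
      (h5 : j = i + 1 ∨ i = j + 1) :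
      tbRel (wη n i * wσ n j * wσ n i) (wσ n j * wσ n i * wη n j)
  | eta_sig_sigInv (i j : ℕ) (h1 : 1 ≤ i) (h2 : i ≤ n - 1) (h3 : 1 ≤ j) (h4 : j ≤ n - 1)
      (h5 : j = i + 1 ∨ i = j + 1) :
      tbRel (wη n i * wσ n j * wσi n i) (wσ n j * wσi n i * wη n j)
  | eta_eta_sig (i j : ℕ) (h1 : 1 ≤ i) (h2 : i ≤ n - 1) (h3 : 1 ≤ j) (h4 : j ≤ n - 1)
      (h5 : j = i + 1 ∨ i = j + 1) :
      tbRel (wη n i * wη n j * wσ n i) (wσ n i * wη n i * wη n j)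
  | eta_eta_sig' (i j : ℕ) (h1 : 1 ≤ i) (h2 : i ≤ n - 1) (h3 : 1 ≤ j) (h4 : j ≤ n - 1)
      (h5 : j = i + 1 ∨ i = j + 1) :
      tbRel (wη n i * wη n j * wσ n i) (wη n j * wσ n i * wη n j)
  | eta_idem (i : ℕ) (h1 : 1 ≤ i) (h2 : i ≤ n - 1) :
      tbRel (wη n i * wη n i) (wη n i)
  | phi_idem : tbRel (wφ n * wφ n) (wφ n)
  | rho_eta (i : ℕ) (h1 : 1 ≤ i) (h2 : i ≤ n - 1) :
      tbRel (wρ n * wη n i) (wη n i * wρ n)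
  | rho_phi : tbRel (wρ n * wφ n) (wφ n * wρ n)
  | phi_eta (i : ℕ) (h1 : 1 ≤ i) (h2 : i ≤ n - 1) :
      tbRel (wφ n * wη n i) (wη n i * wφ n)
  | phi_sig (i : ℕ) (h1 : 2 ≤ i) (h2 : i ≤ n - 1) :
      tbRel (wφ n * wσ n i) (wσ n i * wφ n)
  | phi_move (i : ℕ) (h1 : 2 ≤ i) (h2 : i ≤ n) :
      tbRel (wσDesc n (i - 1) * wφ n * wσiAsc n (i - 1))
        (wσiDesc n (i - 1) * wφ n * wσAsc n (i - 1))
  | phi_eta_one (h : 2 ≤ n) :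
      tbRel (wφ n * wη n 1) (wφ n * wσ n 1 * wφ n * wσi n 1)
  | phi_eta_one' (h : 2 ≤ n) :
      tbRel (wφ n * wσ n 1 * wφ n * wσi n 1) (wσ n 1 * wφ n * wσi n 1 * wη n 1)

/-- The tied braid monoid of type B on `n` strands. -/
def TB : Type := (conGen (tbRel n)).Quotient

instance : Monoid (TB n) := inferInstanceAs (Monoid (conGen (tbRel n)).Quotient)

/-- The canonical projection from the free monoid on the generators onto `TBₙᴮ`. -/
def mk : FreeMonoid (TBGen n) →* TB n := Con.mk' _

/-- The generator `σᵢ` of `TBₙᴮ`. -/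
def σB (i : ℕ) : TB n := mk n (wσ n i)

/-- The generator `σᵢ⁻¹` of `TBₙᴮ`. -/
def σiB (i : ℕ) : TB n := mk n (wσi n i)

/-- The generator `ρ₁` of `TBₙᴮ`. -/
def ρB : TB n := mk n (wρ n)

/-- The generator `ρ₁⁻¹` of `TBₙᴮ`. -/
def ρiB : TB n := mk n (wρi n)

/-- The generator `φ₁` of `TBₙᴮ`. -/
def φB : TB n := mk n (wφ n)

/-- The generator `ηᵢ` of `TBₙᴮ`. -/
def ηB (i : ℕ) : TB n := mk n (wη n i)

/-- The word `σᵢ σᵢ₊₁ ⋯ σₖ` (empty if `k < i`). -/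
def wσRange (i k : ℕ) : FreeMonoid (TBGen n) :=
  ((List.range' i (k + 1 - i)).map (wσ n)).prod

/-- The word `σₖ⁻¹ σₖ₋₁⁻¹ ⋯ σᵢ⁻¹` (empty if `k < i`). -/
def wσiRangeRev (i k : ℕ) : FreeMonoid (TBGen n) :=
  ((List.range' i (k + 1 - i)).reverse.map (wσi n)).prod

/-- The word representing the generalized tie `η_{i,j}`:
`σᵢ ⋯ σ_{j-2} η_{j-1} σ_{j-2}⁻¹ ⋯ σᵢ⁻¹` for `i < j`, with the conventions
`η_{i,i} = 1` and `η_{j,i} = η_{i,j}`. -/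
def wηg (i j : ℕ) : FreeMonoid (TBGen n) :=
  if i = j then 1
  else wσRange n (min i j) (max i j - 2) * wη n (max i j - 1) *
    wσiRangeRev n (min i j) (max i j - 2)

/-- The word representing the generalized tie `φⱼ = σ_{j-1} ⋯ σ₁ φ₁ σ₁⁻¹ ⋯ σ_{j-1}⁻¹`. -/
def wφg (j : ℕ) : FreeMonoid (TBGen n) :=
  wσDesc n (j - 1) * wφ n * wσiAsc n (j - 1)

/-- The generalized tie `η_{i,j}` joining the `i`-th and `j`-th moving strands. -/
def ηg (i j : ℕ) : TB n := mk n (wηg n i j)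

/-- The generalized tie `φⱼ` joining the fixed strand and the `j`-th moving strand. -/
def φg (j : ℕ) : TB n := mk n (wφg n j)

end TiedBraidB

namespace TiedBraidB

theorem mk_rel (n : ℕ) {a b : FreeMonoid (TBGen n)} (h : tbRel n a b) : mk n a = mk n b :=
  (Con.eq _).2 (ConGen.Rel.of _ _ h)

/-- `σᵢ` as a unit. -/
def uσ (n i : ℕ) (h1 : 1 ≤ i) (h2 : i ≤ n - 1) : (TB n)ˣ where
  val := mk n (wσ n i)
  inv := mk n (wσi n i)
  val_inv := by rw [← map_mul, mk_rel n (tbRel.sig_inv i h1 h2), map_one]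
  inv_val := by rw [← map_mul, mk_rel n (tbRel.inv_sig i h1 h2), map_one]

theorem uσ_comm (n i j : ℕ) (h1 : 1 ≤ i) (h2 : i ≤ n - 1) (h1' : 1 ≤ j) (h2' : j ≤ n - 1)
    (h : i + 1 < j) : Commute (uσ n i h1 h2) (uσ n j h1' h2') := by
  apply Units.ext
  have := mk_rel n (tbRel.sig_comm i j h1 h h2')
  rw [map_mul, map_mul] at this
  exact this

/-- `σᵢ ηᵢ₊₁ σᵢ⁻¹ = σᵢ₊₁⁻¹ ηᵢ σᵢ₊₁ = σᵢ⁻¹ ηᵢ₊₁ σᵢ`. -/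
theorem base (n i : ℕ) (h1 : 1 ≤ i) (h2 : i + 1 ≤ n - 1) :
    mk n (wσ n i) * mk n (wη n (i+1)) * mk n (wσi n i)
      = mk n (wσi n (i+1)) * mk n (wη n i) * mk n (wσ n (i+1)) ∧
    mk n (wσi n i) * mk n (wη n (i+1)) * mk n (wσ n i)
      = mk n (wσi n (i+1)) * mk n (wη n i) * mk n (wσ n (i+1)) := by
  have e1 := mk_rel n (tbRel.eta_sig_sig i (i+1) h1 (by omega) (by omega) h2 (Or.inl rfl))
  have e2 := mk_rel n (tbRel.eta_sig_sigInv (i+1) i (by omega) h2 h1 (by omega) (Or.inr rfl))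
  simp only [map_mul] at e1 e2
  set u := uσ n i h1 (by omega) with hu
  set v := uσ n (i+1) (by omega) h2 with hv
  change mk n (wη n i) * (v : TB n) * (u : TB n) = (v : TB n) * (u : TB n) * _ at e1
  change _ * (u : TB n) * ((v⁻¹ : (TB n)ˣ) : TB n) = (u : TB n) * ((v⁻¹ : (TB n)ˣ) : TB n) * _ at e2
  change (u : TB n) * _ * ((u⁻¹ : (TB n)ˣ) : TB n) = ((v⁻¹ : (TB n)ˣ) : TB n) * _ * (v : TB n) ∧
    ((u⁻¹ : (TB n)ˣ) : TB n) * _ * (u : TB n) = ((v⁻¹ : (TB n)ˣ) : TB n) * _ * (v : TB n)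
  constructor
  · rw [Units.mul_inv_eq_iff_eq_mul, mul_assoc, mul_assoc, Units.eq_inv_mul_iff_mul_eq,
      ← mul_assoc, ← e1, mul_assoc]
  · rw [← Units.mul_inv_eq_iff_eq_mul, mul_assoc, mul_assoc, Units.inv_mul_eq_iff_eq_mul,
      ← mul_assoc, e2, mul_assoc]

/-- The expression for signs `s`, on `σᵢ, …, σ_{i+m-1}`. -/
theorem key (n m : ℕ) : ∀ i : ℕ, 1 ≤ i → i + m ≤ n - 1 → ∃ a b : TB n,
    (∀ j (h1 : 1 ≤ j) (h2 : j ≤ n - 1), j < i → Commute a (uσ n j h1 h2 : TB n) ∧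
      Commute b (uσ n j h1 h2 : TB n)) ∧
    ∀ s : ℕ → Bool,
      mk n ((((List.range' i m).map fun l => if s l then wσ n l else wσi n l).prod *
            wη n (i + m)) *
          (((List.range' i m).reverse.map
              fun l => if s l then wσi n l else wσ n l).prod)) = a * mk n (wη n i) * b := by
  induction m with
  | zero =>
    intro i hi hn
    exact ⟨1, 1, fun j h1 h2 hj => ⟨Commute.one_left _, Commute.one_left _⟩, fun s => by simp⟩
  | succ m ih =>
    intro i hi hn
    obtain ⟨a, b, hc, h⟩ := ih (i+1) (by omega) (by omega)
    obtain ⟨b1, b2⟩ := base n i hi (by omega)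
    refine ⟨a * mk n (wσi n (i+1)), mk n (wσ n (i+1)) * b, fun j h1 h2 hj => ?_, fun s => ?_⟩
    · have hcm := uσ_comm n j (i+1) h1 h2 (by omega) (by omega) (by omega)
      obtain ⟨ca, cb⟩ := hc j h1 h2 (by omega)
      have c1 : Commute (mk n (wσ n (i+1))) (uσ n j h1 h2 : TB n) :=
        congrArg Units.val hcm.symm.eq
      have c2 : Commute (mk n (wσi n (i+1))) (uσ n j h1 h2 : TB n) :=
        congrArg Units.val hcm.symm.inv_left.eq
      exact ⟨ca.mul_left c2, c1.mul_left cb⟩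
    · have hs := h s
      rw [show i + 1 + m = i + (m + 1) by omega] at hs
      obtain ⟨ca, cb⟩ := hc i hi (by omega) (by omega)
      have ca' : Commute a (mk n (wσi n i)) := ca.units_inv_right
      have cb' : Commute b (mk n (wσi n i)) := cb.units_inv_right
      change Commute a (mk n (wσ n i)) at ca
      change Commute b (mk n (wσ n i)) at cb
      rw [List.range'_succ]
      simp only [List.map_cons, List.prod_cons, List.reverse_cons, List.map_append, List.map_nil,
        List.prod_append, List.prod_nil, mul_one, map_mul] at hs ⊢
      generalize mk n (List.map _ (List.range' (i+1) m)).prod = X at hs ⊢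
      generalize mk n (List.map _ (List.range' (i+1) m).reverse).prod = Y at hs ⊢
      have mv : ∀ p q y : TB n, Commute a p → Commute b q →
          p * X * mk n (wη n (i + (m+1))) * (Y * q) = a * (p * mk n (wη n (i+1)) * q) * b := by
        intro p q y hp hq
        calc _ = p * (X * mk n (wη n (i + (m+1))) * Y) * q := by simp only [mul_assoc]
          _ = (p * a) * mk n (wη n (i+1)) * (b * q) := by rw [hs]; simp only [mul_assoc]
          _ = _ := by rw [← hp.eq, hq.eq]; simp only [mul_assoc]
      cases s i
      · simp only [Bool.false_eq_true, if_false]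
        rw [mv _ _ 1 ca' cb, b2]; simp only [mul_assoc]
      · simp only [if_true]
        rw [mv _ _ 1 ca cb', b1]; simp only [mul_assoc]

end TiedBraidB

open TiedBraidB in
/-- In `TBₙᴮ`, for `1 ≤ i < k ≤ n` with `k - i > 1` and any choice
`s : ℕ → Bool` (where `s l = true` selects `σₗ` and `s l = false` selects `σₗ⁻¹`),
one has `η_{i,k} = sᵢ sᵢ₊₁ ⋯ s_{k-2} η_{k-1} s_{k-2}⁻¹ ⋯ sᵢ₊₁⁻¹ sᵢ⁻¹`;
that is, all `2^(k-i-1)` such expressions equal the generalized tie `η_{i,k}`. -/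
theorem generalizedTie_all_expressions (n i k : ℕ) (h1 : 1 ≤ i) (h2 : i < k) (h3 : k ≤ n)
    (h4 : 1 < k - i) (s : ℕ → Bool) :
    ηg n i k =
      mk n
        ((((List.range' i (k - 1 - i)).map fun l => if s l then wσ n l else wσi n l).prod *
            wη n (k - 1)) *
          (((List.range' i (k - 1 - i)).reverse.map
              fun l => if s l then wσi n l else wσ n l).prod)) := by
  obtain ⟨a, b, -, h⟩ := key n (k - 1 - i) i h1 (by omega)
  rw [show i + (k - 1 - i) = k - 1 by omega] at h
  rw [h s, ← h (fun _ => true)]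
  simp only [ηg, wηg, wσRange, wσiRangeRev, if_neg (show i ≠ k by omega), min_eq_left h2.le,
    max_eq_right h2.le, show k - 2 + 1 - i = k - 1 - i by omega, if_true]
end

section
/- In the tied braid monoid TB_n^B of type B, the generalized ties φ_j commute with all the ties η_i: φ_j η_i = η_i φ_j for all 1 ≤ i ≤ n−1 and all 1 ≤ j ≤ n. -/
namespace TiedBraidB

theorem rel_eq {n : ℕ} {a b : FreeMonoid (TBGen n)} (h : tbRel n a b) : mk n a = mk n b :=
  (Con.eq _).2 (ConGen.Rel.of _ _ h)

section aux
variable {M : Type*} [Monoid M] {s t a b : M}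

theorem comm_inv (h1 : s * t = 1) (h2 : t * s = 1) (h : Commute s b) : Commute t b := by
  show t * b = b * t
  calc t * b = t * b * (s * t) := by rw [h1, mul_one]
    _ = t * (s * b) * t := by rw [h.eq]; simp only [mul_assoc]
    _ = (t * s) * b * t := by simp only [mul_assoc]
    _ = b * t := by rw [h2, one_mul]

theorem comm_conj (h2 : t * s = 1) (h : Commute a b) :
    Commute (s * a * t) (s * b * t) := by
  have key : ∀ x y : M, (s * x * t) * (s * y * t) = s * (x * y) * t := by
    intro x y
    calc (s * x * t) * (s * y * t) = s * x * (t * s) * (y * t) := by simp only [mul_assoc]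
      _ = s * (x * y) * t := by rw [h2, mul_one]; simp only [mul_assoc]
  show _ * _ = _ * _
  rw [key, key, h.eq]

theorem conj_conj (h1 : s * t = 1) : s * (t * b * s) * t = b := by
  calc s * (t * b * s) * t = (s * t) * b * (s * t) := by simp only [mul_assoc]
    _ = b := by rw [h1, one_mul, mul_one]

theorem comm_conj' (h1 : s * t = 1) (h2 : t * s = 1) (h : Commute a (t * b * s)) :
    Commute (s * a * t) b := by
  have := comm_conj h2 h
  rwa [conj_conj h1] at this

/-- From `e u v = u v f` with `u u' = 1 = u' u`, `v v' = 1`: `u' e u = v f v'`. -/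
theorem conj_eq {u u' v v' e f : M} (hu : u' * u = 1) (hv : v * v' = 1)
    (h : e * u * v = u * v * f) : u' * e * u = v * f * v' := by
  calc u' * e * u = u' * (e * u * (v * v')) := by rw [hv, mul_one, mul_assoc]
    _ = u' * (e * u * v) * v' := by simp only [mul_assoc]
    _ = (u' * u) * (v * f * v') := by rw [h]; simp only [mul_assoc]
    _ = v * f * v' := by rw [hu, one_mul]

end aux

variable {n : ℕ}

theorem sig_mul_inv {i : ℕ} (h1 : 1 ≤ i) (h2 : i ≤ n - 1) : σB n i * σiB n i = 1 := by
  simpa [σB, σiB] using rel_eq (tbRel.sig_inv i h1 h2)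

theorem inv_mul_sig {i : ℕ} (h1 : 1 ≤ i) (h2 : i ≤ n - 1) : σiB n i * σB n i = 1 := by
  simpa [σB, σiB] using rel_eq (tbRel.inv_sig i h1 h2)

theorem φg_one : φg n 1 = φB n := by
  simp [φg, wφg, wσDesc, wσiAsc, φB]

theorem φg_succ {j : ℕ} (h : 1 ≤ j) : φg n (j + 1) = σB n j * φg n j * σiB n j := by
  obtain ⟨k, rfl⟩ : ∃ k, j = k + 1 := ⟨j - 1, by omega⟩
  simp [φg, wφg, wσDesc, wσiAsc, σB, σiB, mul_assoc]

theorem φ_comm_σ {i : ℕ} (h2 : i ≤ n - 1) (j : ℕ) (hj : 1 ≤ j) (h : j < i) :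
    Commute (φg n j) (σB n i) := by
  induction j, hj using Nat.le_induction with
  | base =>
    rw [φg_one]
    simpa [Commute, SemiconjBy, σB, φB] using rel_eq (tbRel.phi_sig i h h2)
  | succ j hj ih =>
    rw [φg_succ hj]
    have c : Commute (σB n j) (σB n i) := by
      simpa [Commute, SemiconjBy, σB] using rel_eq (tbRel.sig_comm j i hj h h2)
    exact (c.mul_left (ih (by omega))).mul_left
      (comm_inv (sig_mul_inv hj (by omega)) (inv_mul_sig hj (by omega)) c)

theorem σ_comm_η_far {i j : ℕ} (h1 : 1 ≤ i) (h2 : i ≤ n - 1) (h3 : 1 ≤ j) (h4 : j ≤ n - 1)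
    (h5 : i + 1 < j ∨ j + 1 < i) : Commute (σB n j) (ηB n i) := by
  simpa [Commute, SemiconjBy, σB, ηB] using (rel_eq (tbRel.eta_sig_far i j h1 h2 h3 h4 h5)).symm

theorem σ_comm_η {i : ℕ} (h1 : 1 ≤ i) (h2 : i ≤ n - 1) : Commute (σB n i) (ηB n i) := by
  simpa [Commute, SemiconjBy, σB, ηB] using (rel_eq (tbRel.eta_sig i h1 h2)).symm

/-- `σⱼ⁻¹ ηᵢ σⱼ = σᵢ ηⱼ σᵢ⁻¹`. -/
theorem conj_η {i j : ℕ} (h1 : 1 ≤ i) (h2 : i ≤ n - 1) (h3 : 1 ≤ j) (h4 : j ≤ n - 1)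
    (h5 : j = i + 1 ∨ i = j + 1) :
    σiB n j * ηB n i * σB n j = σB n i * ηB n j * σiB n i :=
  conj_eq (inv_mul_sig h3 h4) (sig_mul_inv h1 h2)
    (by simpa [σB, ηB] using rel_eq (tbRel.eta_sig_sig i j h1 h2 h3 h4 h5))

theorem φ_comm_η_conj {i j : ℕ} (hj : 1 ≤ j) (hjn : j ≤ n - 1)
    (h : Commute (φg n j) (σiB n j * ηB n i * σB n j)) : Commute (φg n (j + 1)) (ηB n i) := by
  rw [φg_succ hj]
  exact comm_conj' (sig_mul_inv hj hjn) (inv_mul_sig hj hjn) h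

theorem φ_comm_η_far {i : ℕ} (h2 : i ≤ n - 1) (j : ℕ) (hj : 1 ≤ j) (h : j < i) :
    Commute (φg n j) (ηB n i) := by
  induction j, hj using Nat.le_induction with
  | base =>
    rw [φg_one]
    simpa [Commute, SemiconjBy, ηB, φB] using rel_eq (tbRel.phi_eta i (by omega) h2)
  | succ j hj ih =>
    rw [φg_succ hj]
    have c : Commute (σB n j) (ηB n i) :=
      σ_comm_η_far (by omega) h2 hj (by omega) (by omega)
    exact (c.mul_left (ih (by omega))).mul_left
      (comm_inv (sig_mul_inv hj (by omega)) (inv_mul_sig hj (by omega)) c)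

theorem φ_comm_η_self (j : ℕ) (hj : 1 ≤ j) (h : j ≤ n - 1) :
    Commute (φg n j) (ηB n j) := by
  induction j, hj using Nat.le_induction with
  | base =>
    rw [φg_one]
    simpa [Commute, SemiconjBy, ηB, φB] using rel_eq (tbRel.phi_eta 1 le_rfl h)
  | succ j hj ih =>
    apply φ_comm_η_conj hj (by omega)
    rw [conj_η (by omega) h hj (by omega) (by omega)]
    have c := φ_comm_σ h j hj (by omega)
    exact (c.mul_right (ih (by omega))).mul_right
      (comm_inv (sig_mul_inv (by omega) h) (inv_mul_sig (by omega) h) c.symm).symm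

theorem φ_comm_η_all {i : ℕ} (h1 : 1 ≤ i) (h2 : i ≤ n - 1) (j : ℕ) (hj : 1 ≤ j) (hjn : j ≤ n) :
    Commute (φg n j) (ηB n i) := by
  induction j, hj using Nat.le_induction with
  | base =>
    rw [φg_one]
    simpa [Commute, SemiconjBy, ηB, φB] using rel_eq (tbRel.phi_eta i h1 h2)
  | succ j hj ih =>
    have hjn' : j ≤ n - 1 := by omega
    have easy : Commute (σB n j) (ηB n i) → Commute (φg n (j + 1)) (ηB n i) := by
      intro c
      rw [φg_succ hj]
      exact (c.mul_left (ih (by omega))).mul_left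
        (comm_inv (sig_mul_inv hj hjn') (inv_mul_sig hj hjn') c)
    by_cases e1 : i = j + 1
    · subst e1
      exact φ_comm_η_self _ h1 h2
    by_cases e2 : i = j
    · subst e2
      exact easy (σ_comm_η h1 h2)
    by_cases e3 : j = i + 1
    · subst e3
      apply φ_comm_η_conj hj hjn'
      rw [conj_η h1 h2 hj hjn' (Or.inl rfl), φg_succ h1]
      exact comm_conj (inv_mul_sig h1 h2) (φ_comm_η_far hjn' i h1 (by omega))
    · exact easy (σ_comm_η_far h1 h2 hj hjn' (by omega))

end TiedBraidB

open TiedBraidB in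
/-- In `TBₙᴮ`, the generalized ties `φⱼ` commute with all the ties
`ηᵢ`: `φⱼ ηᵢ = ηᵢ φⱼ` for all `1 ≤ i ≤ n-1` and all `1 ≤ j ≤ n`. -/
theorem phi_comm_eta (n i j : ℕ) (hi1 : 1 ≤ i) (hi2 : i ≤ n - 1)
    (hj1 : 1 ≤ j) (hj2 : j ≤ n) :
    φg n j * ηB n i = ηB n i * φg n j := by
  exact (φ_comm_η_all hi1 hi2 j hj1 hj2).eq
end
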